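/- If y ∈ S₆ is a 5-cycle and x ∈ S₆ satisfies x⁻¹ y x = y², then x is a 4-cycle; in particular x has order 4 and fixes exactly two points of {1,…,6}. -/

import Mathlib

/-!
Cycle type is a conjugacy invariant, so `y` may be replaced by the standard 5-cycle
`c = (0 1 2 3 4)`. The map `d : i ↦ 3i` on `ZMod 5`, i.e. the 4-cycle `(1 3 4 2)`, satisfies
`d⁻¹ c d = c²`, and every other solution of this equation differs from `d` by an element of the
centralizer `⟨c⟩` of `c`. These five solutions are exactly the conjugates `cⁱ d c⁻ⁱ`
(`conj_of_standard`), so `x` has the cycle type of `d`, namely `{4}`; support size, order and number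
of fixed points are read off from it.
-/

/-- The 5-cycle `(0 1 2 3 4)` in `S₆`. -/
def stdFive : Equiv.Perm (Fin 6) := ⟨![1, 2, 3, 4, 0, 5], ![4, 0, 1, 2, 3, 5], by decide, by decide⟩

/-- The 4-cycle `(1 3 4 2)` in `S₆`: multiplication by 3 on `{0, …, 4} = ZMod 5`, fixing `5`. -/
def stdFour : Equiv.Perm (Fin 6) := ⟨![0, 3, 1, 4, 2, 5], ![0, 2, 4, 1, 3, 5], by decide, by decide⟩

lemma cycleType_stdFive : stdFive.cycleType = {5} := by
  have h : stdFive = List.formPerm [0, 1, 2, 3, 4] := by decide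
  have hc : stdFive.IsCycle := h ▸ List.isCycle_formPerm (by decide) (by decide)
  rw [hc.cycleType, show stdFive.support.card = 5 by decide]

lemma cycleType_stdFour : stdFour.cycleType = {4} := by
  have h : stdFour = List.formPerm [1, 3, 4, 2] := by decide
  have hc : stdFour.IsCycle := h ▸ List.isCycle_formPerm (by decide) (by decide)
  rw [hc.cycleType, show stdFour.support.card = 4 by decide]

/-- Every solution of `x⁻¹ c x = c²` for the standard 5-cycle `c` is conjugate to `stdFour` by a
power of `c`; checked over the 720 elements of `S₆`. -/
lemma conj_of_standard : ∀ x : Equiv.Perm (Fin 6), stdFive * x = x * stdFive ^ 2 →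
    ∃ i : Fin 5, x = stdFive ^ (i : ℕ) * stdFour * (stdFive ^ (i : ℕ))⁻¹ := by
  decide +kernel

open Finset in
/-- If `y ∈ S₆` is a 5-cycle and `x ∈ S₆` satisfies `x⁻¹ y x = y²`, then
`x` is a 4-cycle; in particular `x` has order 4 and fixes exactly two points of the six
points. -/
theorem conjugator_of_five_cycle_is_four_cycle (y x : Equiv.Perm (Fin 6))
    (hy : y.IsCycle) (hy5 : y.support.card = 5) (hx : x⁻¹ * y * x = y ^ 2) :
    x.IsCycle ∧ x.support.card = 4 ∧ orderOf x = 4 ∧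
      (Finset.univ.filter fun a : Fin 6 => x a = a).card = 2 := by
  have hconj : IsConj stdFive y := by
    rw [Equiv.Perm.isConj_iff_cycleType_eq, cycleType_stdFive, hy.cycleType, hy5]
  obtain ⟨g, rfl⟩ := isConj_iff.1 hconj
  have hx' : stdFive * (g⁻¹ * x * g) = (g⁻¹ * x * g) * stdFive ^ 2 := by
    rw [conj_pow] at hx
    calc stdFive * (g⁻¹ * x * g)
        = g⁻¹ * x * (x⁻¹ * (g * stdFive * g⁻¹) * x) * g := by group
      _ = (g⁻¹ * x * g) * stdFive ^ 2 := by rw [hx]; group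
  obtain ⟨i, hi⟩ := conj_of_standard _ hx'
  have hct : x.cycleType = {4} := by
    have h1 : (g⁻¹ * x * g).cycleType = x.cycleType := by
      simpa using Equiv.Perm.cycleType_conj (σ := x) (τ := g⁻¹)
    rw [← h1, hi, Equiv.Perm.cycleType_conj, cycleType_stdFour]
  have hcard : x.support.card = 4 := by
    rw [← Equiv.Perm.sum_cycleType, hct, Multiset.sum_singleton]
  refine ⟨Equiv.Perm.card_cycleType_eq_one.1 (by rw [hct]; rfl), hcard, ?_, ?_⟩
  · rw [← Equiv.Perm.lcm_cycleType, hct, Multiset.lcm_singleton]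
    rfl
  · have h := Finset.card_filter_add_card_filter_not (s := (Finset.univ : Finset (Fin 6)))
      (fun a => x a = a)
    have hs : (Finset.univ.filter fun a : Fin 6 => ¬ x a = a) = x.support := by
      ext a; simp
    rw [hs, hcard, Finset.card_univ, Fintype.card_fin] at h
    omega
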